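/- arXiv:2006.10957 — 8 statements merged into one kernel-verified Lean document; each statement's English description precedes it below -/
import Mathlib

section
/- There exists n₀ ∈ ℕ such that for all integers n ≥ n₀ and all integers m divisible by 3 with m ≥ log₂ n the following holds. For z ∈ {0,1} let G_z be the uniform distribution on {x ∈ {0,1}^m : |x| = (1+z)·m/3}. For y ∈ {0,1}^n let G_y := G_{y₁} × ⋯ × G_{y_n} be the product distribution on ({0,1}^m)^n. For z ∈ {0,1} let F_z be the uniform distribution on {y ∈ {0,1}^n : y₁ ⊕ ⋯ ⊕ y_n = z}, let D_z := E_{y∼F_z}[G_y], and let D := (1/2)·D_0 + (1/2)·D_1. Then for every conjunction C on {0,1}^{nm} of width at most (1/14)·n·log₂ n with C(D) > 0, one has (2/3)·C(D) < C(D_1) < (4/3)·C(D). -/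
open Finset

/-- Hamming weight of `x : Fin k → Bool`. -/
def hammingWt {k : ℕ} (x : Fin k → Bool) : ℕ := #{i : Fin k | x i = true}

/-- The uniform probability mass function on a finite set `S`. -/
noncomputable def uniformOn {α : Type*} [DecidableEq α] (S : Finset α) : α → ℝ :=
  fun a => if a ∈ S then (1 : ℝ) / S.card else 0

/-- `G_z`: the uniform distribution on `{x ∈ {0,1}^m : |x| = (1+z)·m/3}`
(the hard distribution for GapMaj). -/
noncomputable def gapMajDist (m : ℕ) (z : Bool) : (Fin m → Bool) → ℝ :=
  uniformOn ({x : Fin m → Bool | hammingWt x = (if z then 2 else 1) * (m / 3)} : Finset _)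

/-- `D_z = E_{y ∼ F_z}[G_{y₁} × ⋯ × G_{y_n}]`, where `F_z` is the uniform distribution
on strings `y ∈ {0,1}^n` of parity `z`. -/
noncomputable def xorMixDist (n m : ℕ) (z : Bool) : (Fin n → Fin m → Bool) → ℝ :=
  fun X =>
    (∑ y ∈ ({y : Fin n → Bool | hammingWt y % 2 = (if z then 1 else 0)} : Finset _),
        ∏ i, gapMajDist m (y i) (X i)) /
      (#{y : Fin n → Bool | hammingWt y % 2 = (if z then 1 else 0)} : ℝ)

/-- `C(D)`: the probability, under the distribution (mass function) `D` on
`({0,1}^m)^n ≅ {0,1}^{nm}`, that the conjunction with positive literals `P` and negative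
literals `N` is satisfied. -/
noncomputable def conjProb {n m : ℕ} (P N : Finset (Fin n × Fin m))
    (D : (Fin n → Fin m → Bool) → ℝ) : ℝ :=
  ∑ X ∈ ({X : Fin n → Fin m → Bool |
      (∀ p ∈ P, X p.1 p.2 = true) ∧ (∀ p ∈ N, X p.1 p.2 = false)} : Finset _), D X

/-- choose ratio bounds -/
lemma choose_ratio (M t k d : ℕ) (h1 : M ≤ 4 * (k + 1) + k) (h2 : k + d ≤ t) (h3 : 2 * t ≤ M) :
    M.choose (k + d) ≤ 4 ^ d * M.choose k ∧ M.choose k ≤ 4 ^ d * M.choose (k + d) := by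
  induction d with
  | zero => simp
  | succ d ih =>
    obtain ⟨i1, i2⟩ := ih (by omega)
    have e := Nat.choose_succ_right_eq M (k + d)
    obtain ⟨r, hr⟩ : ∃ r, M = k + d + r := ⟨M - (k + d), by omega⟩
    have hr' : M - (k + d) = r := by omega
    rw [hr'] at e
    rw [← add_assoc, pow_succ]
    set A := M.choose (k + d)
    set B := M.choose (k + d + 1)
    have b1 : B ≤ 4 * A := by
      have : B * (k + d + 1) ≤ (4 * A) * (k + d + 1) := by
        rw [e]
        have : r ≤ 4 * (k + d + 1) := by omega
        nlinarith
      exact Nat.le_of_mul_le_mul_right this (by omega)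
    have b2 : A ≤ 4 * B := by
      have : A * r ≤ (4 * B) * r := by
        rw [← e]
        have : k + d + 1 ≤ 4 * r := by omega
        nlinarith
      exact Nat.le_of_mul_le_mul_right this (by omega)
    constructor
    · calc B ≤ 4 * A := b1
        _ ≤ 4 * (4 ^ d * M.choose k) := by gcongr
        _ = _ := by ring
    · calc M.choose k ≤ 4 ^ d * A := i2
        _ ≤ 4 ^ d * (4 * B) := by gcongr
        _ = _ := by ring

def blockSet {m : ℕ} (P N : Finset (Fin m)) : Finset (Fin m → Bool) :=
  {x | (∀ p ∈ P, x p = true) ∧ (∀ p ∈ N, x p = false)}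

lemma mem_block {m : ℕ} (P N : Finset (Fin m)) (k : ℕ) (x : Fin m → Bool) :
    x ∈ ({x ∈ blockSet P N | hammingWt x = k} : Finset _) ↔
      ((∀ p ∈ P, x p = true) ∧ (∀ p ∈ N, x p = false)) ∧ #{i : Fin m | x i = true} = k := by
  rw [mem_filter, blockSet, mem_filter, hammingWt]
  simp only [mem_univ, true_and]

lemma count_block {m : ℕ} (P N : Finset (Fin m)) (hd : Disjoint P N) (k : ℕ) (hk : #P ≤ k) :
    #{x ∈ blockSet P N | hammingWt x = k} = (m - (#P + #N)).choose (k - #P) := by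
  have hc : #((P ∪ N)ᶜ) = m - (#P + #N) := by
    rw [card_compl, card_union_of_disjoint hd, Fintype.card_fin]
  rw [← hc, ← card_powersetCard]
  symm
  refine Finset.card_bij' (fun S _ => fun i => decide (i ∈ S ∪ P))
    (fun x _ => ({i | x i = true} : Finset (Fin m)) \ P) ?_ ?_ ?_ ?_
  · intro S hS
    rw [mem_powersetCard] at hS
    obtain ⟨h1, h2⟩ := hS
    have hSP : Disjoint S P := by
      rw [Finset.disjoint_left]; intro i hi hp
      have := h1 hi
      simp at this; exact this.1 hp
    rw [mem_block]
    simp only [decide_eq_true_eq, decide_eq_false_iff_not]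
    refine ⟨⟨fun p hp => by simp [hp], fun p hp => ?_⟩, ?_⟩
    · intro h
      rcases mem_union.1 h with h | h
      · have := h1 h
        simp at this; exact this.2 hp
      · exact Finset.disjoint_left.1 hd h hp
    · rw [Finset.filter_mem_eq_inter, univ_inter, card_union_of_disjoint hSP, h2]; omega
  · intro x hx
    rw [mem_block] at hx
    obtain ⟨⟨h1, h2⟩, h3⟩ := hx
    rw [mem_powersetCard]
    constructor
    · intro i hi
      simp at hi ⊢
      refine ⟨hi.2, fun hN => ?_⟩
      have := h2 i hN
      simp [hi.1] at this
    · rw [card_sdiff_of_subset, h3]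
      intro i hi; simpa using h1 i hi
  · intro S hS
    rw [mem_powersetCard] at hS
    obtain ⟨h1, h2⟩ := hS
    ext i
    simp
    constructor
    · rintro ⟨h | h, h'⟩
      · exact h
      · exact absurd h h'
    · intro hi
      have := h1 hi
      simp at this
      exact ⟨Or.inl hi, this.1⟩
  · intro x hx
    rw [mem_block] at hx
    obtain ⟨⟨h1, h2⟩, h3⟩ := hx
    funext i
    by_cases hp : i ∈ P
    · simp [hp, h1 i hp]
    · simp [hp]

noncomputable def bp {m : ℕ} (P N : Finset (Fin m)) (z : Bool) : ℝ :=
  ∑ x ∈ blockSet P N, gapMajDist m z x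

lemma bp_eq {m : ℕ} (P N : Finset (Fin m)) (z : Bool) :
    bp P N z = #{x ∈ blockSet P N | hammingWt x = (if z then 2 else 1) * (m / 3)} *
      (1 / (#{x : Fin m → Bool | hammingWt x = (if z then 2 else 1) * (m / 3)} : ℝ)) := by
  unfold bp gapMajDist uniformOn
  simp only [mem_filter, mem_univ, true_and]
  rw [← Finset.sum_filter, Finset.sum_const, nsmul_eq_mul]

lemma bp_nonneg {m : ℕ} (P N : Finset (Fin m)) (z : Bool) : 0 ≤ bp P N z := by
  rw [bp_eq]; positivity

lemma count_all (m k : ℕ) : #{x : Fin m → Bool | hammingWt x = k} = m.choose k := by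
  have := count_block (m := m) ∅ ∅ (by simp) k (by simp)
  simpa [blockSet] using this

lemma bp_good {m : ℕ} (h3 : 3 ∣ m) (P N : Finset (Fin m)) (hd : Disjoint P N)
    (hw : 2 * (#P + #N) ≤ m / 3) :
    bp P N false ≤ 4 ^ (#P + #N) * bp P N true ∧ bp P N true ≤ 4 ^ (#P + #N) * bp P N false := by
  obtain ⟨t, rfl⟩ := h3
  have ht : 3 * t / 3 = t := by omega
  rw [bp_eq, bp_eq]
  simp only [ht] at hw ⊢
  simp only [Bool.false_eq_true, if_true, if_false, one_mul]
  rw [count_all, count_all, count_block P N hd t (by omega), count_block P N hd (2 * t) (by omega)]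
  have e1 : (3 * t).choose (2 * t) = (3 * t).choose t :=
    Nat.choose_symm_of_eq_add (by omega)
  have e2 : (3 * t - (#P + #N)).choose (2 * t - #P) = (3 * t - (#P + #N)).choose (t - #N) :=
    Nat.choose_symm_of_eq_add (by omega)
  rw [e1, e2]
  set M := 3 * t - (#P + #N) with hM
  have key : M.choose (t - #P) ≤ 4 ^ (#P + #N) * M.choose (t - #N) ∧
      M.choose (t - #N) ≤ 4 ^ (#P + #N) * M.choose (t - #P) := by
    rcases le_total (#P) (#N) with h | h
    · obtain ⟨h1, h2⟩ := choose_ratio M t (t - #N) (#N - #P) (by omega) (by omega) (by omega)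
      have e : t - #N + (#N - #P) = t - #P := by omega
      rw [e] at h1 h2
      have hp : 4 ^ (#N - #P) ≤ 4 ^ (#P + #N) := Nat.pow_le_pow_right (by norm_num) (by omega)
      exact ⟨h1.trans (by gcongr), h2.trans (by gcongr)⟩
    · obtain ⟨h1, h2⟩ := choose_ratio M t (t - #P) (#P - #N) (by omega) (by omega) (by omega)
      have e : t - #P + (#P - #N) = t - #N := by omega
      rw [e] at h1 h2
      have hp : 4 ^ (#P - #N) ≤ 4 ^ (#P + #N) := Nat.pow_le_pow_right (by norm_num) (by omega)
      exact ⟨h2.trans (by gcongr), h1.trans (by gcongr)⟩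
  have k1 : ((M.choose (t - #P) : ℕ) : ℝ) ≤ 4 ^ (#P + #N) * (M.choose (t - #N) : ℕ) := by
    exact_mod_cast key.1
  have k2 : ((M.choose (t - #N) : ℕ) : ℝ) ≤ 4 ^ (#P + #N) * (M.choose (t - #P) : ℕ) := by
    exact_mod_cast key.2
  constructor
  · rw [← mul_assoc]; gcongr
  · rw [← mul_assoc]; gcongr

lemma diff_bound (A B s K : ℝ) (hA : 0 ≤ A) (hB : 0 ≤ B) (hs0 : 0 ≤ s) (hs : s * K ≤ 1)
    (hs1 : s ≤ 1)
    (h1 : A ≤ K * B) (h2 : B ≤ K * A) : |A - B| ≤ (1 - s) * (A + B) := by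
  have a1 : s * A ≤ B := by nlinarith
  have a2 : s * B ≤ A := by nlinarith
  rw [abs_le]; constructor <;> nlinarith

/-- parity sums -/
noncomputable def parSum {n : ℕ} (f : Fin n → Bool → ℝ) (z : Bool) : ℝ :=
  ∑ y ∈ ({y : Fin n → Bool | hammingWt y % 2 = (if z then 1 else 0)} : Finset _), ∏ i, f i (y i)

lemma sum_all {n : ℕ} (f : Fin n → Bool → ℝ) :
    ∑ y : Fin n → Bool, ∏ i, f i (y i) = ∏ i, (f i false + f i true) := by
  have := (Finset.prod_univ_sum (fun _ : Fin n => (univ : Finset Bool)) (fun i b => f i b)).symm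
  rw [Fintype.piFinset_univ] at this
  rw [this]
  refine Finset.prod_congr rfl fun i _ => ?_
  rw [Fintype.sum_bool, add_comm]

lemma split_par {n : ℕ} (F : (Fin n → Bool) → ℝ) :
    ∑ y, F y = (∑ y ∈ ({y : Fin n → Bool | hammingWt y % 2 = 0} : Finset _), F y) +
      ∑ y ∈ ({y : Fin n → Bool | hammingWt y % 2 = 1} : Finset _), F y := by
  rw [← Finset.sum_filter_add_sum_filter_not univ (fun y : Fin n → Bool => hammingWt y % 2 = 0)]
  congr 2
  ext y; simp

lemma parSum_add {n : ℕ} (f : Fin n → Bool → ℝ) :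
    parSum f false + parSum f true = ∏ i, (f i false + f i true) := by
  rw [← sum_all, split_par]; simp [parSum]

lemma parSum_sub {n : ℕ} (f : Fin n → Bool → ℝ) :
    parSum f false - parSum f true = ∏ i, (f i false - f i true) := by
  have h := sum_all (fun i b => (if b then -1 else 1) * f i b)
  simp only [Bool.false_eq_true, if_true, if_false, one_mul, neg_one_mul, ← sub_eq_add_neg] at h
  rw [← h, split_par]
  have key : ∀ y : Fin n → Bool, ∏ i, ((if y i then -1 else 1) * f i (y i)) =
      (-1) ^ hammingWt y * ∏ i, f i (y i) := by
    intro y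
    rw [Finset.prod_mul_distrib]
    congr 1
    rw [Finset.prod_ite]; simp [hammingWt]
  simp only [key]
  unfold parSum
  rw [sub_eq_add_neg, ← Finset.sum_neg_distrib]
  simp only [Bool.false_eq_true, if_true, if_false]
  congr 1
  · refine Finset.sum_congr rfl fun y hy => ?_
    rw [Even.neg_one_pow (Nat.even_iff.2 (by simpa using hy)), one_mul]
  · refine Finset.sum_congr rfl fun y hy => ?_
    rw [Odd.neg_one_pow (Nat.odd_iff.2 (by simpa using hy)), neg_one_mul]

lemma parCard {n : ℕ} (hn : 0 < n) : ∃ c : ℝ, 0 < c ∧ ∀ z : Bool,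
    (#{y : Fin n → Bool | hammingWt y % 2 = (if z then 1 else 0)} : ℝ) = c := by
  have h1 := parSum_add (n := n) (fun _ _ => 1)
  have h2 := parSum_sub (n := n) (fun _ _ => 1)
  have e : ∀ z, parSum (n := n) (fun _ _ => 1) z =
    (#{y : Fin n → Bool | hammingWt y % 2 = (if z then 1 else 0)} : ℝ) := by
    intro z; simp [parSum]
  rw [sub_self, Finset.prod_const, Finset.card_univ, Fintype.card_fin, zero_pow (by omega)] at h2
  refine ⟨parSum (n := n) (fun _ _ => 1) false, ?_, ?_⟩
  · have : 0 < ∏ i : Fin n, ((1 : ℝ) + 1) := by positivity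
    linarith
  · intro z
    rw [← e]
    cases z
    · rfl
    · linarith

def secn {n m : ℕ} (P : Finset (Fin n × Fin m)) (i : Fin n) : Finset (Fin m) :=
  {j | (i, j) ∈ P}

lemma sum_secn {n m : ℕ} (P : Finset (Fin n × Fin m)) : ∑ i, #(secn P i) = #P := by
  have : ∀ i, #(secn P i) = ∑ j, if (i, j) ∈ P then 1 else 0 := by
    intro i; simp [secn]
  simp only [this]
  rw [← Fintype.sum_prod_type' (f := fun i j => if (i, j) ∈ P then 1 else 0)]
  simp

lemma conj_eq {n m : ℕ} (P N : Finset (Fin n × Fin m)) (z : Bool) :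
    conjProb P N (xorMixDist n m z) = parSum (fun i b => bp (secn P i) (secn N i) b) z /
      (#{y : Fin n → Bool | hammingWt y % 2 = (if z then 1 else 0)} : ℝ) := by
  unfold conjProb xorMixDist parSum
  rw [← Finset.sum_div, Finset.sum_comm]
  congr 1
  refine Finset.sum_congr rfl fun y _ => ?_
  unfold bp
  rw [Finset.prod_univ_sum]
  refine Finset.sum_congr ?_ fun _ _ => rfl
  ext X
  simp only [mem_filter, mem_univ, true_and, Fintype.mem_piFinset, blockSet, secn]
  constructor
  · rintro ⟨h1, h2⟩ i
    exact ⟨fun j hj => h1 _ hj, fun j hj => h2 _ hj⟩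
  · intro h
    exact ⟨fun p hp => (h p.1).1 p.2 hp, fun p hp => (h p.1).2 p.2 hp⟩

lemma conj_avg {n m : ℕ} (P N : Finset (Fin n × Fin m)) :
    conjProb P N (fun X => (xorMixDist n m false X + xorMixDist n m true X) / 2) =
    (conjProb P N (xorMixDist n m false) + conjProb P N (xorMixDist n m true)) / 2 := by
  unfold conjProb
  rw [← Finset.sum_div, Finset.sum_add_distrib]

lemma good_count {n : ℕ} (w : Fin n → ℕ) (L : ℝ) (hL : 0 < L)
    (hw : (∑ i, (w i : ℝ)) ≤ 1 / 14 * n * L) :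
    (n : ℝ) / 2 ≤ #{i | 7 * (w i : ℝ) ≤ L} := by
  have h1 : (#{i | 7 * (w i : ℝ) ≤ L} : ℝ) + #{i | ¬ 7 * (w i : ℝ) ≤ L} = n := by
    have := Finset.card_filter_add_card_filter_not (s := univ) (fun i => 7 * (w i : ℝ) ≤ L)
    rw [Finset.card_univ, Fintype.card_fin] at this
    exact_mod_cast this
  have h2 : (#{i | ¬ 7 * (w i : ℝ) ≤ L} : ℝ) * (L / 7) ≤ ∑ i, (w i : ℝ) := by
    rw [← nsmul_eq_mul]
    refine (Finset.card_nsmul_le_sum _ (fun i => (w i : ℝ)) _ ?_).trans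
      (Finset.sum_le_sum_of_subset_of_nonneg (Finset.subset_univ _) fun _ _ _ => by positivity)
    intro i hi
    simp at hi
    linarith
  have h3 : (#{i | ¬ 7 * (w i : ℝ) ≤ L} : ℝ) ≤ n / 2 := by
    have : (#{i | ¬ 7 * (w i : ℝ) ≤ L} : ℝ) * L ≤ (n / 2) * L := by linarith
    exact le_of_mul_le_mul_right this hL
  linarith

/-- core of Theorem 1.2, `XOR ∘ GapMaj`. There is `n₀` such that for all
`n ≥ n₀` and all `m` divisible by 3 with `m ≥ log₂ n`: for every conjunction `C` on
`{0,1}^{nm}` of width at most `(1/14)·n·log₂ n` with `C(D) > 0`, where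
`D = (1/2)·D₀ + (1/2)·D₁`, one has `(2/3)·C(D) < C(D₁) < (4/3)·C(D)`. -/
theorem stmt_0 :
    ∃ n₀ : ℕ, ∀ n m : ℕ, n₀ ≤ n → 3 ∣ m → Real.logb 2 n ≤ (m : ℝ) →
      ∀ P N : Finset (Fin n × Fin m), Disjoint P N →
      ((P.card : ℝ) + (N.card : ℝ) ≤ (1 / 14) * n * Real.logb 2 n) →
      0 < conjProb P N (fun X => (xorMixDist n m false X + xorMixDist n m true X) / 2) →
      (2 / 3) * conjProb P N (fun X => (xorMixDist n m false X + xorMixDist n m true X) / 2)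
          < conjProb P N (xorMixDist n m true) ∧
        conjProb P N (xorMixDist n m true)
          < (4 / 3) * conjProb P N
              (fun X => (xorMixDist n m false X + xorMixDist n m true X) / 2) := by
  refine ⟨36, ?_⟩
  intro n m hn h3 hm P N hd hw hpos
  have hn' : (36 : ℝ) ≤ n := by exact_mod_cast hn
  set L := Real.logb 2 n with hLdef
  have hL : 0 < L := Real.logb_pos (by norm_num) (by linarith)
  obtain ⟨c, hc, hcard⟩ := parCard (n := n) (by omega)
  rw [conj_avg, conj_eq, conj_eq, hcard, hcard] at hpos ⊢
  set f : Fin n → Bool → ℝ := fun i b => bp (secn P i) (secn N i) b with hf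
  have hadd := parSum_add f
  have hsub := parSum_sub f
  set w : Fin n → ℕ := fun i => #(secn P i) + #(secn N i) with hwdef
  have hfn : ∀ i b, 0 ≤ f i b := fun i b => bp_nonneg _ _ _
  have hsum : (∑ i, (w i : ℝ)) ≤ 1 / 14 * n * L := by
    refine le_trans (le_of_eq ?_) hw
    rw [← sum_secn P, ← sum_secn N]
    simp only [hwdef]
    push_cast
    rw [Finset.sum_add_distrib]
  have hgood := good_count w L hL hsum
  set s : ℝ := 1 / √n with hs
  have hsq : (6 : ℝ) ≤ √n := Real.le_sqrt_of_sq_le (by linarith)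
  have hs0 : 0 ≤ s := by positivity
  have hs1 : s ≤ 1 := by rw [hs, div_le_one (by linarith)]; linarith
  have hblock : ∀ i, |f i false - f i true| ≤
      (if 7 * (w i : ℝ) ≤ L then 1 - s else 1) * (f i false + f i true) := by
    intro i
    split_ifs with hi
    · have hdi : Disjoint (secn P i) (secn N i) := by
        rw [Finset.disjoint_left] at hd ⊢
        intro j hj hj'
        simp only [secn, mem_filter, mem_univ, true_and] at hj hj'
        exact hd hj hj'
      have hwm : 7 * w i ≤ m := by exact_mod_cast hi.trans hm
      obtain ⟨g1, g2⟩ := bp_good h3 (secn P i) (secn N i) hdi (by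
        show 2 * w i ≤ m / 3
        omega)
      refine diff_bound _ _ s (4 ^ w i) (hfn _ _) (hfn _ _) hs0 ?_ hs1 g1 g2
      rw [hs, one_div, inv_mul_le_one₀ (by linarith)]
      apply Real.le_sqrt_of_sq_le
      have e1 : ((4 : ℝ) ^ w i) ^ 2 = (2 : ℝ) ^ ((4 * w i : ℕ) : ℝ) := by
        rw [Real.rpow_natCast, ← pow_mul, show (4 : ℝ) = 2 ^ 2 by norm_num, ← pow_mul]
        congr 1; ring
      have e2 : (n : ℝ) = (2 : ℝ) ^ L :=
        (Real.rpow_logb (by norm_num) (by norm_num) (by linarith)).symm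
      rw [e1, e2]
      apply Real.rpow_le_rpow_of_exponent_le (by norm_num)
      push_cast
      have : (0 : ℝ) ≤ w i := Nat.cast_nonneg _
      linarith
    · have h1 := hfn i false
      have h2 := hfn i true
      rw [abs_le]; constructor <;> linarith
  have hprod : |∏ i, (f i false - f i true)| ≤
      (1 - s) ^ #{i | 7 * (w i : ℝ) ≤ L} * ∏ i, (f i false + f i true) := by
    rw [Finset.abs_prod]
    refine (Finset.prod_le_prod (fun _ _ => abs_nonneg _) (fun i _ => hblock i)).trans
      (le_of_eq ?_)
    rw [Finset.prod_mul_distrib, Finset.prod_ite]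
    simp
  set g := #{i | 7 * (w i : ℝ) ≤ L} with hg
  have hpw : (1 - s) ^ g < 1 / 3 := by
    have a1 : (1 - s) ^ g ≤ Real.exp (-s) ^ g :=
      pow_le_pow_left₀ (by linarith) (by linarith [Real.add_one_le_exp (-s)]) _
    rw [← Real.exp_nat_mul] at a1
    have a2 : 3 ≤ g * s := by
      have : (n : ℝ) / 2 * s ≤ g * s := by gcongr
      have e : (n : ℝ) / 2 * s = √n / 2 := by
        rw [hs]
        have := Real.mul_self_sqrt (show (0 : ℝ) ≤ n by linarith)
        field_simp
        nlinarith
      linarith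
    have a3 : (4 : ℝ) ≤ Real.exp (g * s) := by linarith [Real.add_one_le_exp (g * s)]
    have a4 : Real.exp (g * -s) ≤ 1 / 4 := by
      rw [mul_neg, Real.exp_neg, ← one_div]
      exact one_div_le_one_div_of_le (by norm_num) a3
    linarith
  rw [← hadd, ← hsub] at hprod
  have hT : 0 < parSum f false + parSum f true := by
    have : (parSum f false / c + parSum f true / c) / 2 =
      (parSum f false + parSum f true) / (2 * c) := by field_simp
    rw [this] at hpos
    exact (div_pos_iff_of_pos_right (by positivity)).1 hpos
  have hlt := hprod.trans_lt (mul_lt_mul_of_pos_right hpw hT)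
  rw [abs_lt] at hlt
  rw [← add_div, div_div, ← mul_div_assoc, ← mul_div_assoc]
  constructor
  · rw [div_lt_div_iff₀ (by positivity) hc]
    nlinarith [mul_pos hc (sub_pos.2 hlt.2)]
  · rw [div_lt_div_iff₀ hc (by positivity)]
    nlinarith [mul_pos hc (sub_pos.2 hlt.1)]
end

section
/- There exists n₀ ∈ ℕ such that for all even integers n ≥ n₀ and all even integers m with m ≥ log₂ n the following holds. Let G_0 be the point distribution on 0^m and let G_1 be the uniform distribution on {x ∈ {0,1}^m : |x| = m/2}. For y ∈ {0,1}^n let G_y := G_{y₁} × ⋯ × G_{y_n} be the product distribution on ({0,1}^m)^n. For ζ ∈ {0,1,2} let F_ζ be the uniform distribution on {y ∈ {0,1}^n : |y| = n/2 − 1 + ζ} and let D_ζ := E_{y∼F_ζ}[G_y]. Then for every conjunction C on {0,1}^{nm} of width at most (1/16)·n·log₂ n, at least one of the following holds: C(D_0) > (1/3)·C(D_1), or C(D_2) > (4/3)·C(D_1), or C(D_1) = 0. -/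
open Finset

/-- `G_z`: `G_0` is the point distribution on `0^m`, and `G_1` is the uniform distribution
on `{x ∈ {0,1}^m : |x| = m/2}` (the hard distributions for GapOr). -/
noncomputable def gapOrDist (m : ℕ) (z : Bool) : (Fin m → Bool) → ℝ :=
  uniformOn ({x : Fin m → Bool | hammingWt x = (if z then m / 2 else 0)} : Finset _)

/-- `D_ζ = E_{y ∼ F_ζ}[G_{y₁} × ⋯ × G_{y_n}]`, where `F_ζ` is the uniform distribution
on strings `y ∈ {0,1}^n` of Hamming weight `n/2 − 1 + ζ`. -/
noncomputable def majMixDist (n m : ℕ) (ζ : ℕ) : (Fin n → Fin m → Bool) → ℝ :=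
  fun X =>
    (∑ y ∈ ({y : Fin n → Bool | hammingWt y = n / 2 - 1 + ζ} : Finset _),
        ∏ i, gapOrDist m (y i) (X i)) /
      (#{y : Fin n → Bool | hammingWt y = n / 2 - 1 + ζ} : ℝ)

/-- indicator of a finset -/
def indB {k : ℕ} (T : Finset (Fin k)) : Fin k → Bool := fun i => decide (i ∈ T)

lemma sum_wt_eq {k : ℕ} (w : ℕ) (f : (Fin k → Bool) → ℝ) :
    ∑ y ∈ ({y : Fin k → Bool | hammingWt y = w} : Finset _), f y
      = ∑ T ∈ powersetCard w (univ : Finset (Fin k)), f (indB T) := by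
  symm
  refine Finset.sum_nbij' (fun T => indB T) (fun y => univ.filter (fun i => y i = true)) ?_ ?_ ?_ ?_ ?_
  · intro T hT
    rw [mem_powersetCard] at hT
    rw [mem_filter]
    exact ⟨mem_univ _, by simp [hammingWt, indB, hT.2]⟩
  · intro y hy
    rw [mem_filter] at hy
    exact mem_powersetCard.2 ⟨subset_univ _, hy.2⟩
  · intro T hT
    ext i; simp [indB]
  · intro y hy
    ext i; simp [indB]
  · intro T hT; rfl

lemma card_wt_eq {k : ℕ} (w : ℕ) :
    #({y : Fin k → Bool | hammingWt y = w} : Finset _) = k.choose w := by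
  have h := sum_wt_eq (k := k) w (fun _ => 1)
  simp only [sum_const, nsmul_eq_mul, mul_one, card_powersetCard, card_univ, Fintype.card_fin] at h
  exact_mod_cast h

/-- elementary symmetric sums -/
noncomputable def esy {ι : Type*} [DecidableEq ι] (F : Finset ι) (b : ι → ℝ) (k : ℕ) : ℝ :=
  ∑ T ∈ powersetCard k F, ∏ i ∈ T, b i

lemma double_count {ι : Type*} [DecidableEq ι] (F : Finset ι) (k : ℕ) (g : Finset ι → ℝ) :
    ∑ S ∈ powersetCard k F, ∑ j ∈ F \ S, g (insert j S)
      = ((k : ℝ) + 1) * ∑ T ∈ powersetCard (k+1) F, g T := by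
  have h1 : ((k : ℝ) + 1) * ∑ T ∈ powersetCard (k+1) F, g T
      = ∑ T ∈ powersetCard (k+1) F, ∑ j ∈ T, g T := by
    rw [mul_sum]
    refine sum_congr rfl fun T hT => ?_
    rw [mem_powersetCard] at hT
    simp [hT.2]
  rw [h1, sum_sigma', sum_sigma']
  refine Finset.sum_nbij' (fun p => ⟨insert p.2 p.1, p.2⟩) (fun p => ⟨p.1.erase p.2, p.2⟩) ?_ ?_ ?_ ?_ ?_
  · rintro ⟨S, j⟩ h
    simp only [mem_sigma, mem_powersetCard, mem_sdiff] at h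
    simp only [mem_sigma, mem_powersetCard]
    refine ⟨⟨insert_subset h.2.1 h.1.1, ?_⟩, mem_insert_self _ _⟩
    rw [card_insert_of_notMem h.2.2, h.1.2]
  · rintro ⟨T, j⟩ h
    simp only [mem_sigma, mem_powersetCard] at h
    simp only [mem_sigma, mem_powersetCard, mem_sdiff]
    refine ⟨⟨(erase_subset _ _).trans h.1.1, ?_⟩, h.1.1 h.2, notMem_erase _ _⟩
    rw [card_erase_of_mem h.2, h.1.2]; rfl
  · rintro ⟨S, j⟩ h
    simp only [mem_sigma, mem_powersetCard, mem_sdiff] at h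
    simp [erase_insert h.2.2]
  · rintro ⟨T, j⟩ h
    simp only [mem_sigma, mem_powersetCard] at h
    simp [insert_erase h.2]
  · rintro ⟨S, j⟩ h; rfl

lemma esy_zero {ι : Type*} [DecidableEq ι] (F : Finset ι) (b : ι → ℝ) : esy F b 0 = 1 := by
  simp [esy]

lemma esy_nonneg {ι : Type*} [DecidableEq ι] (F : Finset ι) (b : ι → ℝ) (hb : ∀ i ∈ F, 0 ≤ b i)
    (k : ℕ) : 0 ≤ esy F b k := by
  refine sum_nonneg fun T hT => prod_nonneg fun i hi => hb i ?_
  exact (mem_powersetCard.1 hT).1 hi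

lemma esy_succ {ι : Type*} [DecidableEq ι] (F : Finset ι) (b : ι → ℝ) (k : ℕ) :
    ((k : ℝ) + 1) * esy F b (k+1)
      = ∑ S ∈ powersetCard k F, (∏ i ∈ S, b i) * ∑ j ∈ F \ S, b j := by
  rw [esy, ← double_count F k (fun T => ∏ i ∈ T, b i)]
  refine sum_congr rfl fun S hS => ?_
  rw [mul_sum]
  refine sum_congr rfl fun j hj => ?_
  rw [prod_insert (mem_sdiff.1 hj).2, mul_comm]

lemma esy_one {ι : Type*} [DecidableEq ι] (F : Finset ι) (b : ι → ℝ) :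
    esy F b 1 = ∑ i ∈ F, b i := by
  have := esy_succ F b 0
  simpa using this

/-- The reverse log-concavity bound. -/
lemma esy_key {ι : Type*} [DecidableEq ι] (F : Finset ι) (b : ι → ℝ) (hb : ∀ i ∈ F, 0 ≤ b i)
    (hb1 : ∀ i ∈ F, b i ≤ 1) (k : ℕ) :
    (((k : ℝ) + 1) * esy F b (k+1))^2 ≤
      esy F b k * (((k:ℝ)+1) * (((k:ℝ)+2) * esy F b (k+2)) + ((k : ℝ) + 1) * esy F b (k+1)) := by
  have hB0 : ∀ S, 0 ≤ ∑ j ∈ F \ S, b j := fun S => sum_nonneg fun j hj => hb j (mem_sdiff.1 hj).1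
  have hp : ∀ S ∈ powersetCard k F, 0 ≤ ∏ i ∈ S, b i := fun S hS =>
    prod_nonneg fun i hi => hb i ((mem_powersetCard.1 hS).1 hi)
  have h2 : ((k:ℝ)+1) * (((k:ℝ)+2) * esy F b (k+2)) =
      ∑ S ∈ powersetCard k F, (∏ i ∈ S, b i) * ∑ j ∈ F \ S, b j * (∑ l ∈ F \ S, b l - b j) := by
    have := esy_succ F b (k+1)
    push_cast at this
    rw [show ((k:ℝ)+2) = (k:ℝ)+1+1 by ring, this,
      ← double_count F k (fun T => (∏ i ∈ T, b i) * ∑ j ∈ F \ T, b j)]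
    refine sum_congr rfl fun S hS => ?_
    rw [mul_sum]
    refine sum_congr rfl fun j hj => ?_
    rw [prod_insert (mem_sdiff.1 hj).2, sdiff_insert, ← add_sum_erase (F \ S) b hj]
    ring
  have h3 : ∑ S ∈ powersetCard k F, (∏ i ∈ S, b i) * (∑ j ∈ F \ S, b j)^2 ≤
      ((k:ℝ)+1) * (((k:ℝ)+2) * esy F b (k+2)) + ((k : ℝ) + 1) * esy F b (k+1) := by
    rw [h2, esy_succ, ← sum_add_distrib]
    refine sum_le_sum fun S hS => ?_
    rw [← mul_add]
    refine mul_le_mul_of_nonneg_left ?_ (hp S hS)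
    rw [← sum_add_distrib, pow_two, sum_mul]
    refine sum_le_sum fun j hj => ?_
    have hj' := (mem_sdiff.1 hj).1
    nlinarith [hb j hj', hb1 j hj']
  have h4 : (((k : ℝ) + 1) * esy F b (k+1))^2 ≤ esy F b k *
      ∑ S ∈ powersetCard k F, (∏ i ∈ S, b i) * (∑ j ∈ F \ S, b j)^2 := by
    rw [esy_succ, esy]
    refine sum_sq_le_sum_mul_sum_of_sq_le_mul _ hp
      (fun S hS => mul_nonneg (hp S hS) (sq_nonneg _)) fun S hS => le_of_eq (by ring)
  exact h4.trans (mul_le_mul_of_nonneg_left h3 (esy_nonneg F b hb k))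

/-- satisfaction probability of the `i`-th block -/
noncomputable def blk {n m : ℕ} (P N : Finset (Fin n × Fin m)) (z : Bool) (i : Fin n) : ℝ :=
  ∑ x ∈ ({x : Fin m → Bool | (∀ j, (i, j) ∈ P → x j = true) ∧ (∀ j, (i, j) ∈ N → x j = false)} :
    Finset _), gapOrDist m z x

lemma conjProb_eq {n m : ℕ} (P N : Finset (Fin n × Fin m)) (ζ : ℕ) :
    conjProb P N (majMixDist n m ζ) =
      (∑ T ∈ powersetCard (n / 2 - 1 + ζ) (univ : Finset (Fin n)),
        ∏ i, blk P N (indB T i) i) / (n.choose (n/2 - 1 + ζ) : ℝ) := by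
  unfold conjProb majMixDist
  rw [← sum_div, card_wt_eq, sum_comm, sum_wt_eq]
  congr 1
  refine sum_congr rfl fun T hT => ?_
  unfold blk
  rw [prod_univ_sum]
  refine sum_congr ?_ fun _ _ => rfl
  ext X
  simp only [mem_filter, mem_univ, true_and, Fintype.mem_piFinset]
  constructor
  · rintro ⟨h1, h2⟩ i
    exact ⟨fun j hj => h1 _ hj, fun j hj => h2 _ hj⟩
  · intro h
    exact ⟨fun p hp => (h p.1).1 p.2 hp, fun p hp => (h p.1).2 p.2 hp⟩

lemma gapOrDist_nonneg (m : ℕ) (z : Bool) (x : Fin m → Bool) : 0 ≤ gapOrDist m z x := by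
  unfold gapOrDist uniformOn
  split_ifs <;> positivity

lemma blk_nonneg {n m : ℕ} (P N : Finset (Fin n × Fin m)) (z : Bool) (i : Fin n) :
    0 ≤ blk P N z i := sum_nonneg fun _ _ => gapOrDist_nonneg _ _ _

lemma blk_le_one {n m : ℕ} (P N : Finset (Fin n × Fin m)) (z : Bool) (i : Fin n) :
    blk P N z i ≤ 1 := by
  have h : blk P N z i ≤ ∑ x, gapOrDist m z x :=
    sum_le_sum_of_subset_of_nonneg (subset_univ _) fun _ _ _ => gapOrDist_nonneg _ _ _
  refine h.trans ?_
  unfold gapOrDist uniformOn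
  rw [← sum_filter, sum_const, nsmul_eq_mul]
  simp only [filter_mem_eq_inter, univ_inter]
  rw [mul_one_div]
  exact div_self_le_one _

lemma hammingWt_zero {m : ℕ} (x : Fin m → Bool) : hammingWt x = 0 ↔ x = fun _ => false := by
  unfold hammingWt
  rw [card_eq_zero, filter_eq_empty_iff]
  constructor
  · intro h; funext i; simpa using h (mem_univ i)
  · rintro rfl; simp

lemma gapOrDist_false {m : ℕ} (x : Fin m → Bool) :
    gapOrDist m false x = if x = (fun _ => false) then 1 else 0 := by
  unfold gapOrDist uniformOn
  rw [card_wt_eq]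
  simp [hammingWt_zero]

lemma blk_false {n m : ℕ} (P N : Finset (Fin n × Fin m)) (i : Fin n) :
    blk P N false i = if ∃ j, (i, j) ∈ P then 0 else 1 := by
  unfold blk
  simp only [gapOrDist_false]
  rw [sum_ite_eq']
  simp only [mem_filter, mem_univ, true_and]
  split_ifs with h1 h2 h2 <;> simp_all

lemma blk_true_lower {n m : ℕ} (P N : Finset (Fin n × Fin m)) (i : Fin n)
    (hP : ¬ ∃ j, (i, j) ∈ P) :
    ((m - #{j | (i, j) ∈ N}).choose (m/2) : ℝ) / m.choose (m/2) ≤ blk P N true i := by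
  unfold blk gapOrDist uniformOn
  simp only [if_true, card_wt_eq, mem_filter, mem_univ, true_and]
  rw [← sum_filter, sum_const, nsmul_eq_mul, mul_one_div]
  gcongr
  have hc : (m - #{j | (i, j) ∈ N}).choose (m/2) =
      #(powersetCard (m/2) ((univ : Finset (Fin m)) \ ({j | (i, j) ∈ N} : Finset (Fin m)))) := by
    rw [card_powersetCard, card_sdiff_of_subset (subset_univ _), card_univ, Fintype.card_fin]
  rw [hc]
  refine card_le_card_of_injOn indB ?_ ?_
  · intro T hT
    rw [mem_coe, mem_powersetCard] at hT
    push Not at hP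
    simp only [coe_filter, mem_filter, mem_univ, true_and, Set.mem_setOf_eq]
    refine ⟨⟨fun j hj => absurd hj (hP j), fun j hj => ?_⟩, ?_⟩
    · have : j ∉ T := fun h => by
        have := hT.1 h
        simp [hj] at this
      simp [indB, this]
    · simp [hammingWt, indB, hT.2]
  · intro S _ T _ h
    ext j
    have := congrFun h j
    simpa [indB] using this

lemma choose_bound (m w : ℕ) (h : 4 * w ≤ m) :
    m.choose (m/2) ≤ 4^w * (m - w).choose (m/2) := by
  induction w with
  | zero => simp
  | succ w ih =>
    refine (ih (by omega)).trans ?_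
    rw [pow_succ, mul_assoc]
    refine Nat.mul_le_mul_left _ ?_
    obtain ⟨M, hM⟩ : ∃ M, m - w = M + 1 := ⟨m - w - 1, by omega⟩
    rw [hM, show m - (w+1) = M by omega]
    have h1 := Nat.choose_mul_succ_eq M (m/2)
    have h2 : M + 1 ≤ 4 * (M + 1 - m/2) := by omega
    have h3 : 0 < M + 1 - m/2 := by omega
    refine Nat.le_of_mul_le_mul_right ?_ h3
    rw [← h1]
    calc _ ≤ M.choose (m/2) * (4 * (M + 1 - m/2)) := Nat.mul_le_mul_left _ h2
      _ = _ := by ring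

lemma Q_eq {n m : ℕ} (P N : Finset (Fin n × Fin m)) (A : Finset (Fin n))
    (hA : ∀ i, i ∈ A ↔ ∃ j, (i, j) ∈ P) (k : ℕ) :
    ∑ T ∈ powersetCard k (univ : Finset (Fin n)), ∏ i, blk P N (indB T i) i
      = if #A ≤ k then (∏ i ∈ A, blk P N true i) * esy Aᶜ (blk P N true) (k - #A) else 0 := by
  have hz : ∀ T : Finset (Fin n), ¬ A ⊆ T → ∏ i, blk P N (indB T i) i = 0 := by
    intro T hT
    obtain ⟨i, hi, hiT⟩ := not_subset.1 hT
    refine prod_eq_zero (mem_univ i) ?_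
    simp [indB, hiT, blk_false, (hA i).1 hi]
  split_ifs with hk
  · rw [← sum_filter_of_ne (p := fun T => A ⊆ T) (fun T _ h => by
      by_contra h'; exact h (hz T h'))]
    rw [esy, mul_sum]
    refine Finset.sum_nbij' (fun T => T \ A) (fun T => A ∪ T) ?_ ?_ ?_ ?_ ?_
    · intro T hT
      simp only [mem_filter, mem_powersetCard] at hT
      rw [mem_powersetCard, card_sdiff_of_subset hT.2, hT.1.2]
      refine ⟨fun x hx => ?_, rfl⟩
      simpa using (mem_sdiff.1 hx).2
    · intro T hT
      rw [mem_powersetCard] at hT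
      have hd : Disjoint A T := (disjoint_compl_right (a := A)).mono_right hT.1
      simp only [mem_filter, mem_powersetCard, subset_univ, true_and, subset_union_left, and_true]
      rw [card_union_of_disjoint hd, hT.2]; omega
    · intro T hT
      simp only [mem_filter] at hT
      exact union_sdiff_of_subset hT.2
    · intro T hT
      rw [mem_powersetCard] at hT
      have hd : Disjoint A T := (disjoint_compl_right (a := A)).mono_right hT.1
      exact union_sdiff_cancel_left hd
    · intro T hT
      simp only [mem_filter] at hT
      rw [← prod_union disjoint_sdiff, union_sdiff_of_subset hT.2]
      rw [← prod_subset (subset_univ T)]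
      · refine prod_congr rfl fun i hi => ?_
        simp [indB, hi]
      · intro i _ hi
        have : i ∉ A := fun h => hi (hT.2 h)
        rw [hA] at this
        simp [indB, hi, blk_false, this]
  · refine sum_eq_zero fun T hT => hz T fun h => hk ?_
    rw [mem_powersetCard] at hT
    rw [← hT.2]
    exact card_le_card h

/-- The sum of the block probabilities over many free blocks is large. -/
lemma sum_large {n m : ℕ} (hn : 1024 ≤ n) (hm : Real.logb 2 n ≤ (m : ℝ))
    (P N : Finset (Fin n × Fin m))
    (hw : ((P.card : ℝ) + (N.card : ℝ) ≤ (1 / 16) * n * Real.logb 2 n))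
    (F : Finset (Fin n)) (hF : ∀ i ∈ F, ¬ ∃ j, (i, j) ∈ P) (hFc : (n : ℝ) / 2 ≤ #F) :
    5 ≤ ∑ i ∈ F, blk P N true i := by
  set L := Real.logb 2 n with hL
  have hnR : (1024 : ℝ) ≤ n := by exact_mod_cast hn
  have hLpos : 0 < L := Real.logb_pos (by norm_num) (by linarith)
  set w : Fin n → ℕ := fun i => #{j | (i, j) ∈ N} with hwdef
  have hsum : ∑ i ∈ F, (w i : ℝ) ≤ N.card := by
    have h1 : N.card = ∑ i, w i := by
      rw [card_eq_sum_card_fiberwise (f := Prod.fst) (t := univ) (by simp)]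
      refine sum_congr rfl fun i _ => ?_
      simp only [hwdef]
      symm
      refine card_bij (fun j _ => (i, j)) ?_ ?_ ?_
      · intro j hj; simpa using hj
      · intro a _ b _ h; simpa using h
      · rintro ⟨a, b⟩ h
        simp only [mem_filter] at h
        obtain ⟨h, rfl⟩ := h
        exact ⟨b, by simpa using h, rfl⟩
    rw [h1]; push_cast
    exact sum_le_sum_of_subset_of_nonneg (subset_univ _) fun _ _ _ => by positivity
  set G := F.filter (fun i => 4 * (w i : ℝ) ≤ L) with hG
  have hbad : (#(F.filter (fun i => ¬ 4 * (w i : ℝ) ≤ L)) : ℝ) * (L/4) ≤ N.card := by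
    refine le_trans ?_ hsum
    rw [← nsmul_eq_mul, ← sum_const]
    refine le_trans ?_ (sum_le_sum_of_subset_of_nonneg (filter_subset (fun i => ¬ 4 * (w i : ℝ) ≤ L) F) fun _ _ _ => by positivity)
    refine sum_le_sum fun i hi => ?_
    have := (mem_filter.1 hi).2
    linarith
  have hsplit : (#G : ℝ) + #(F.filter (fun i => ¬ 4 * (w i : ℝ) ≤ L)) = #F := by
    rw [← Nat.cast_add, hG, card_filter_add_card_filter_not]
  have hGc : (n : ℝ)/4 ≤ #G := by
    have hP0 : (0:ℝ) ≤ P.card := by positivity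
    have : (#(F.filter (fun i => ¬ 4 * (w i : ℝ) ≤ L)) : ℝ) ≤ n/4 := by
      by_contra hc
      have hc := lt_of_not_ge hc
      nlinarith
    linarith
  have hsq : Real.sqrt n * Real.sqrt n = n := Real.mul_self_sqrt (by linarith)
  have hsq32 : 32 ≤ Real.sqrt n := Real.le_sqrt_of_sq_le (by norm_num; linarith)
  have hb : ∀ i ∈ G, 1 / Real.sqrt n ≤ blk P N true i := by
    intro i hi
    obtain ⟨hiF, hiw⟩ := mem_filter.1 hi
    refine le_trans ?_ (blk_true_lower P N i (hF i hiF))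
    change _ ≤ ((m - w i).choose (m/2) : ℝ) / _
    have h4 : 4 * w i ≤ m := by
      have : (4 * (w i : ℝ)) ≤ m := hiw.trans hm
      exact_mod_cast this
    have hcb : (m.choose (m/2) : ℝ) ≤ 4^(w i) * (m - w i).choose (m/2) := by
      exact_mod_cast choose_bound m (w i) h4
    have hpos : (0 : ℝ) < m.choose (m/2) := by
      exact_mod_cast Nat.choose_pos (Nat.div_le_self _ _)
    have h16 : (4:ℝ)^(w i) ≤ Real.sqrt n := by
      apply Real.le_sqrt_of_sq_le
      have h2 : (2:ℝ)^(4 * (w i : ℝ)) ≤ n := by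
        rw [← Real.le_logb_iff_rpow_le (by norm_num) (by linarith)]
        exact hiw
      have h3 : ((4:ℝ)^(w i))^2 = (2:ℝ)^(4 * (w i : ℝ)) := by
        rw [show (4 * (w i : ℝ)) = ((4 * w i : ℕ) : ℝ) by push_cast; ring, Real.rpow_natCast,
          ← pow_mul, show (4:ℝ) = 2^2 by norm_num, ← pow_mul]
        congr 1; ring
      rw [h3]; exact h2
    rw [div_le_div_iff₀ (by linarith) hpos, one_mul]
    calc _ ≤ _ := hcb
      _ ≤ Real.sqrt n * (m - w i).choose (m/2) := by gcongr
      _ = _ := mul_comm _ _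
  calc (5:ℝ) ≤ (n/4) * (1 / Real.sqrt n) := by
        rw [mul_one_div, le_div_iff₀ (by linarith)]
        nlinarith
    _ ≤ #G * (1 / Real.sqrt n) := by gcongr
    _ = ∑ i ∈ G, 1 / Real.sqrt n := by rw [sum_const, nsmul_eq_mul]
    _ ≤ ∑ i ∈ G, blk P N true i := sum_le_sum hb
    _ ≤ _ := sum_le_sum_of_subset_of_nonneg (filter_subset _ _) fun _ _ _ => blk_nonneg _ _ _ _

/-- core of Theorem 1.3, `MAJ ∘ GapOr`. There is `n₀` such that for all
even `n ≥ n₀` and all even `m ≥ log₂ n`: for every conjunction `C` on `{0,1}^{nm}` of width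
at most `(1/16)·n·log₂ n`, either `C(D₀) > (1/3)·C(D₁)`, or `C(D₂) > (4/3)·C(D₁)`, or
`C(D₁) = 0`. -/
theorem stmt_1 :
    ∃ n₀ : ℕ, ∀ n m : ℕ, n₀ ≤ n → 2 ∣ n → 2 ∣ m → Real.logb 2 n ≤ (m : ℝ) →
      ∀ P N : Finset (Fin n × Fin m), Disjoint P N →
      ((P.card : ℝ) + (N.card : ℝ) ≤ (1 / 16) * n * Real.logb 2 n) →
      (1 / 3) * conjProb P N (majMixDist n m 1) < conjProb P N (majMixDist n m 0) ∨
        (4 / 3) * conjProb P N (majMixDist n m 1) < conjProb P N (majMixDist n m 2) ∨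
        conjProb P N (majMixDist n m 1) = 0 := by
  refine ⟨1024, ?_⟩
  intro n m hn h2n h2m hm P N hPN hw
  obtain ⟨H, rfl⟩ := h2n
  obtain ⟨K, hK⟩ : ∃ K, H = K + 1 := ⟨H - 1, by omega⟩
  set A : Finset (Fin (2 * H)) := {i | ∃ j, (i, j) ∈ P} with hAdef
  have hA : ∀ i, i ∈ A ↔ ∃ j, (i, j) ∈ P := fun i => by simp [hAdef]
  rw [conjProb_eq, conjProb_eq, conjProb_eq]
  rw [Q_eq P N A hA, Q_eq P N A hA, Q_eq P N A hA]
  have e0 : 2 * H / 2 - 1 + 0 = K := by omega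
  have e1 : 2 * H / 2 - 1 + 1 = K + 1 := by omega
  have e2 : 2 * H / 2 - 1 + 2 = K + 2 := by omega
  rw [e0, e1, e2]
  by_cases hs : #A ≤ K + 1
  swap
  · right; right; rw [if_neg hs]; simp
  rw [if_pos hs, if_pos (show #A ≤ K + 2 by omega)]
  set b := blk P N true with hb
  set c := ∏ i ∈ A, b i with hc
  have hb0 : ∀ i ∈ Aᶜ, 0 ≤ b i := fun i _ => blk_nonneg _ _ _ _
  have hb1 : ∀ i ∈ Aᶜ, b i ≤ 1 := fun i _ => blk_le_one _ _ _ _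
  have hc0 : 0 ≤ c := prod_nonneg fun i _ => blk_nonneg _ _ _ _
  have hKR : (511 : ℝ) ≤ K := by
    have : 511 ≤ K := by omega
    exact_mod_cast this
  -- binomials
  have hch2 : ((2 * H).choose (K+2) : ℝ) * (K + 2) = (2*H).choose (K+1) * (K + 1) := by
    have := Nat.choose_succ_right_eq (2*H) (K+1)
    rw [show 2 * H - (K+1) = K + 1 by omega] at this
    exact_mod_cast this
  have hch0 : ((2 * H).choose K : ℝ) * (K + 2) = (2*H).choose (K+1) * (K + 1) := by
    have := Nat.choose_succ_right_eq (2*H) K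
    rw [show 2 * H - K = K + 2 by omega] at this
    exact_mod_cast this.symm
  have hchpos : (0 : ℝ) < (2*H).choose (K+1) := by
    exact_mod_cast Nat.choose_pos (by omega)
  set W : ℝ := ((2*H).choose (K+1) : ℝ) with hW
  have hV2 : ((2 * H).choose (K+2) : ℝ) = W * ((K+1)/(K+2)) := by
    rw [← mul_div_assoc, ← hch2]; field_simp
  have hV0 : ((2 * H).choose K : ℝ) = W * ((K+1)/(K+2)) := by
    rw [← mul_div_assoc, ← hch0]; field_simp
  rw [hV2, hV0]
  set ρ : ℝ := (K+1)/(K+2) with hρ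
  have hρ0 : 0 < ρ := by positivity
  have hρ1 : ρ < 1 := by rw [hρ, div_lt_one (by positivity)]; linarith
  have hE0 := esy_nonneg Aᶜ b hb0
  by_cases hz : c * esy Aᶜ b (K + 1 - #A) = 0
  · right; right; rw [hz]; simp
  have hcpos : 0 < c := lt_of_le_of_ne hc0 fun h => hz (by rw [← h]; simp)
  have hEpos : 0 < esy Aᶜ b (K + 1 - #A) :=
    lt_of_le_of_ne (hE0 _) fun h => hz (by rw [← h]; simp)
  have hbig : K ≤ #A → 5 ≤ esy Aᶜ b 1 := by
    intro hKA
    rw [esy_one]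
    refine sum_large hn hm P N hw Aᶜ (fun i hi h => (mem_compl.1 hi) ((hA i).2 h)) ?_
    have h1 : #Aᶜ = 2 * H - #A := by rw [card_compl, Fintype.card_fin]
    have h2 : H ≤ #Aᶜ := by omega
    have h2' : (H:ℝ) ≤ #Aᶜ := by exact_mod_cast h2
    push_cast; linarith
  -- reduction of the two alternatives to esy
  have hred2 : (4/3) * ρ * esy Aᶜ b (K + 1 - #A) < esy Aᶜ b (K + 2 - #A) →
      4 / 3 * (c * esy Aᶜ b (K + 1 - #A) / W) < c * esy Aᶜ b (K + 2 - #A) / (W * ρ) := by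
    intro h
    rw [lt_div_iff₀ (by positivity)]
    have : 4 / 3 * (c * esy Aᶜ b (K + 1 - #A) / W) * (W * ρ) =
      c * ((4/3) * ρ * esy Aᶜ b (K + 1 - #A)) := by field_simp
    rw [this]
    exact mul_lt_mul_of_pos_left h hcpos
  by_cases hs0 : #A = K + 1
  · right; left
    apply hred2
    rw [show K + 1 - #A = 0 by omega, show K + 2 - #A = 1 by omega, esy_zero]
    have := hbig (by omega)
    linarith
  obtain ⟨k, hk⟩ : ∃ k, K = #A + k := ⟨K - #A, by omega⟩
  rw [if_pos (show #A ≤ K by omega)]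
  have hred0 : (1/3) * ρ * esy Aᶜ b (K + 1 - #A) < esy Aᶜ b (K - #A) →
      1 / 3 * (c * esy Aᶜ b (K + 1 - #A) / W) < c * esy Aᶜ b (K - #A) / (W * ρ) := by
    intro h
    rw [lt_div_iff₀ (by positivity)]
    have : 1 / 3 * (c * esy Aᶜ b (K + 1 - #A) / W) * (W * ρ) =
      c * ((1/3) * ρ * esy Aᶜ b (K + 1 - #A)) := by field_simp
    rw [this]
    exact mul_lt_mul_of_pos_left h hcpos
  by_cases hD0 : (1/3) * ρ * esy Aᶜ b (K + 1 - #A) < esy Aᶜ b (K - #A)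
  · left; exact hred0 hD0
  right; left
  apply hred2
  push Not at hD0
  have hkey := esy_key Aᶜ b hb0 hb1 k
  rw [show K + 1 - #A = k + 1 by omega] at *
  rw [show K + 2 - #A = k + 2 by omega]
  rw [show K - #A = k by omega] at hD0
  have hk0 : (0:ℝ) ≤ k := by positivity
  set x := esy Aᶜ b k
  set y := esy Aᶜ b (k+1)
  set z := esy Aᶜ b (k+2)
  have hx0 : 0 ≤ x := hE0 _
  have hz0 : 0 ≤ z := hE0 _
  -- (k+1) y^2 ≤ x ((k+2) z + y)
  have hkey' : ((k:ℝ)+1) * y^2 ≤ x * (((k:ℝ)+2) * z + y) := by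
    have : ((k:ℝ)+1) * (((k:ℝ)+1) * y^2) ≤ ((k:ℝ)+1) * (x * (((k:ℝ)+2) * z + y)) := by
      linarith
    exact le_of_mul_le_mul_left this (by positivity)
  rcases Nat.eq_zero_or_pos k with h0 | h0
  · subst h0
    have hx1 : x = 1 := esy_zero _ _
    have h5 : 5 ≤ y := hbig (by omega)
    rw [hx1] at hkey'
    norm_num at hkey'
    have h6 := mul_le_mul_of_nonneg_right h5 hEpos.le
    have h7 := mul_lt_mul_of_pos_right hρ1 hEpos
    linarith
  · have hk1 : (1:ℝ) ≤ k := by exact_mod_cast h0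
    have h1 : ((k:ℝ)+1) * y^2 ≤ ((1/3) * ρ * y) * (((k:ℝ)+2) * z + y) :=
      hkey'.trans (mul_le_mul_of_nonneg_right hD0 (by positivity))
    have h2 : ((k:ℝ)+1) * y ≤ (1/3) * ρ * (((k:ℝ)+2) * z + y) := by
      have : y * (((k:ℝ)+1) * y) ≤ y * ((1/3) * ρ * (((k:ℝ)+2) * z + y)) := by linarith
      exact le_of_mul_le_mul_left this hEpos
    have h3 : 3 * ((k:ℝ)+1) * y ≤ ((k:ℝ)+2) * z + y := by
      have : ρ * (((k:ℝ)+2) * z + y) ≤ 1 * (((k:ℝ)+2) * z + y) :=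
        mul_le_mul_of_nonneg_right hρ1.le (by positivity)
      linarith
    have h4 : (4/3) * ρ * y < (4/3) * y := by
      have := mul_lt_mul_of_pos_right hρ1 hEpos
      linarith
    have h5 : ((k:ℝ)+2) * ((4/3) * y) ≤ ((k:ℝ)+2) * z := by
      have := mul_le_mul_of_nonneg_right hk1 hEpos.le
      linarith
    have h6 := le_of_mul_le_mul_left h5 (by positivity)
    linarith
end

section
/- Let m be a positive integer divisible by 3, and let P, N ⊆ [m] be disjoint sets with |P| + |N| = w ≤ m/7. Then for each z ∈ {0,1}: |{A ⊆ [m] : |A| = (1+z)·m/3, P ⊆ A, A ∩ N = ∅}| ≤ 3^w · |{A ⊆ [m] : |A| = (2−z)·m/3, P ⊆ A, A ∩ N = ∅}|. Equivalently, if G_z denotes the uniform distribution on {x ∈ {0,1}^m : |x| = (1+z)·m/3} and C is the conjunction with positive literal set P and negative literal set N, then C(G_z) ≤ 3^w · C(G_{1−z}) for each z ∈ {0,1}. -/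
open Finset

lemma count_aux (m : ℕ) (P N : Finset (Fin m)) (hdisj : Disjoint P N) (s : ℕ) (hs : P.card ≤ s) :
    #{A : Finset (Fin m) | A.card = s ∧ P ⊆ A ∧ Disjoint A N}
      = (m - (P.card + N.card)).choose (s - P.card) := by
  have h1 : #((univ : Finset (Fin m)) \ (P ∪ N)) = m - (P.card + N.card) := by
    rw [card_sdiff_of_subset (subset_univ _), card_union_of_disjoint hdisj]; simp
  rw [← h1, ← card_powersetCard]
  refine card_bij' (fun A _ => A \ P) (fun B _ => B ∪ P) ?_ ?_ ?_ ?_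
  · intro A hA
    simp only [mem_filter, mem_univ, true_and] at hA
    obtain ⟨h, hP, hN⟩ := hA
    rw [mem_powersetCard, card_sdiff_of_subset hP, h]
    refine ⟨?_, rfl⟩
    intro x hx
    rw [mem_sdiff] at hx
    simp only [mem_sdiff, mem_univ, mem_union, true_and, not_or]
    exact ⟨hx.2, Finset.disjoint_left.1 hN hx.1⟩
  · intro B hB
    rw [mem_powersetCard] at hB
    obtain ⟨hB, hc⟩ := hB
    have hBP : Disjoint B P := Finset.disjoint_left.2 fun x hx hp => by
      have := hB hx; simp [hp] at this
    have hBN : Disjoint B N := Finset.disjoint_left.2 fun x hx hp => by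
      have := hB hx; simp [hp] at this
    simp only [mem_filter, mem_univ, true_and]
    refine ⟨?_, subset_union_right, disjoint_union_left.2 ⟨hBN, hdisj⟩⟩
    rw [card_union_of_disjoint hBP]; omega
  · intro A hA
    simp only [mem_filter, mem_univ, true_and] at hA
    exact sdiff_union_of_subset hA.2.1
  · intro B hB
    rw [mem_powersetCard] at hB
    have hBP : Disjoint B P := Finset.disjoint_left.2 fun x hx hp => by
      have := hB.1 hx; simp [hp] at this
    exact union_sdiff_cancel_right hBP

lemma step_aux (k : ℕ) : ∀ n, 2 * n ≤ k → (2 * k).choose k ≤ 3 ^ n * (2 * k - n).choose k := by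
  intro n
  induction n with
  | zero => simp
  | succ n ih =>
    intro h
    refine (ih (by omega)).trans ?_
    rw [pow_succ, mul_assoc]
    refine Nat.mul_le_mul_left _ ?_
    obtain ⟨d, rfl⟩ : ∃ d, k = 2 * n + 2 + d := ⟨k - (2 * n + 2), by omega⟩
    set k := 2 * n + 2 + d with hk
    obtain ⟨b, hb⟩ : ∃ b, b = 2 * k - (n + 1) := ⟨_, rfl⟩
    have e : 2 * k - n = b + 1 := by omega
    rw [e, ← hb]
    have key := Nat.choose_mul_succ_eq b k
    have hpos : 0 < b + 1 - k := by omega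
    refine Nat.le_of_mul_le_mul_right ?_ hpos
    rw [← key]
    have : b + 1 ≤ 3 * (b + 1 - k) := by omega
    calc _ ≤ b.choose k * (3 * (b + 1 - k)) := Nat.mul_le_mul_left _ this
      _ = _ := by ring

lemma multi_aux (x y k : ℕ) :
    (x + y + k).choose x * (y + k).choose k = (x + y + k).choose y * (x + k).choose k := by
  have a1 := Nat.add_choose_mul_factorial_mul_factorial x (y + k)
  have a2 := Nat.add_choose_mul_factorial_mul_factorial y k
  have a3 := Nat.add_choose_mul_factorial_mul_factorial y (x + k)
  have a4 := Nat.add_choose_mul_factorial_mul_factorial x k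
  rw [show y + (x + k) = x + y + k by ring] at a3
  rw [← add_assoc] at a1
  have s1 : (y + k).choose y = (y + k).choose k := Nat.choose_symm_add
  have s2 : (x + k).choose x = (x + k).choose k := Nat.choose_symm_add
  have t1 : (x + y + k).choose x = (x + y + k).choose (y + k) :=
    Nat.choose_symm_of_eq_add (by ring)
  have t2 : (x + y + k).choose y = (x + y + k).choose (x + k) :=
    Nat.choose_symm_of_eq_add (by ring)
  rw [t1, t2]
  have hp : 0 < x.factorial * y.factorial * k.factorial := by positivity
  refine Nat.eq_of_mul_eq_mul_right hp ?_
  rw [← a2] at a1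
  rw [← a4] at a3
  linarith

lemma main_aux (k p n : ℕ) (h : 7 * (p + n) ≤ 3 * k) :
    (3 * k - (p + n)).choose (k - p) ≤ 3 ^ (p + n) * (3 * k - (p + n)).choose (k - n) := by
  have e := multi_aux (k - p) (k - n) k
  rw [show k - p + (k - n) + k = 3 * k - (p + n) by omega, show k - n + k = 2 * k - n by omega,
    show k - p + k = 2 * k - p by omega] at e
  have hpos : 0 < (2 * k - n).choose k := Nat.choose_pos (by omega)
  refine Nat.le_of_mul_le_mul_right ?_ hpos
  rw [e]
  have h1 : (2 * k - p).choose k ≤ 3 ^ (p + n) * (2 * k - n).choose k :=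
    calc _ ≤ (2 * k).choose k := Nat.choose_le_choose _ (by omega)
      _ ≤ _ := step_aux k n (by omega)
      _ ≤ _ := Nat.mul_le_mul_right _ (Nat.pow_le_pow_right (by norm_num) (by omega))
  refine (Nat.mul_le_mul_left _ h1).trans (le_of_eq ?_)
  ring

/-- Fact 3.2. Let `3 ∣ m`, `m > 0`, and let `P, N ⊆ [m]` be disjoint with
`|P| + |N| = w ≤ m/7`. Then for each `z ∈ {0,1}`,
`#{A ⊆ [m] : |A| = (1+z)m/3, P ⊆ A, A ∩ N = ∅} ≤ 3^w · #{A ⊆ [m] : |A| = (2−z)m/3, P ⊆ A, A ∩ N = ∅}`,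
i.e. `C(G_z) ≤ 3^w · C(G_{1−z})` for the conjunction `C` with positive literals `P` and
negative literals `N`. -/
theorem stmt_2 (m : ℕ) (hm : 0 < m) (h3 : 3 ∣ m) (P N : Finset (Fin m))
    (hdisj : Disjoint P N) (w : ℕ) (hw : P.card + N.card = w) (hwm : 7 * w ≤ m) :
    ∀ z : Bool,
      #{A : Finset (Fin m) | A.card = (if z then 2 else 1) * (m / 3) ∧ P ⊆ A ∧ Disjoint A N}
        ≤ 3 ^ w *
      #{A : Finset (Fin m) | A.card = (if z then 1 else 2) * (m / 3) ∧ P ⊆ A ∧ Disjoint A N} := by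
  obtain ⟨k, rfl⟩ := h3
  have hk : 3 * k / 3 = k := by omega
  subst hw
  have c1 := count_aux (3 * k) P N hdisj k (by omega)
  have c2 := count_aux (3 * k) P N hdisj (2 * k) (by omega)
  rw [← Nat.choose_symm (by omega),
    show 3 * k - (P.card + N.card) - (2 * k - P.card) = k - N.card by omega] at c2
  intro z
  rw [hk]
  cases z
  · simp only [Bool.false_eq_true, if_false, one_mul]
    rw [c1, c2]
    exact main_aux k _ _ hwm
  · simp only [if_true, one_mul]
    rw [c1, c2]
    have := main_aux k N.card P.card (by omega)
    rwa [add_comm N.card] at this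
end

section
/- Let m be a positive integer divisible by 3 and let w ≤ m be a natural number. Then 3^w · binom(m − w, m/3) ≤ 2^w · binom(m, m/3), where binom denotes the binomial coefficient. -/
theorem step_aux_s3 (n k : ℕ) (h : n + 1 ≤ 3 * k) :
    3 * n.choose k ≤ 2 * (n + 1).choose k := by
  have h1 := Nat.choose_mul_succ_eq n k
  have h2 : 3 * (n + 1 - k) ≤ 2 * (n + 1) := by omega
  have h3 := Nat.mul_le_mul_left ((n + 1).choose k) h2
  refine Nat.le_of_mul_le_mul_right (c := n + 1) ?_ (Nat.succ_pos n)
  calc 3 * n.choose k * (n + 1) = 3 * (n.choose k * (n + 1)) := by ring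
    _ = (n + 1).choose k * (3 * (n + 1 - k)) := by rw [h1]; ring
    _ ≤ (n + 1).choose k * (2 * (n + 1)) := h3
    _ = 2 * (n + 1).choose k * (n + 1) := by ring

/-- If `m > 0` is divisible by 3 and `w ≤ m`, then
`3^w · binom(m−w, m/3) ≤ 2^w · binom(m, m/3)`. -/
theorem stmt_3 (m w : ℕ) (hm : 0 < m) (h3 : 3 ∣ m) (hw : w ≤ m) :
    3 ^ w * (m - w).choose (m / 3) ≤ 2 ^ w * m.choose (m / 3) := by
  induction w with
  | zero => simp
  | succ w ih =>
    have ih' := ih (by omega)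
    have hs := step_aux_s3 (m - (w + 1)) (m / 3) (by omega)
    rw [show m - (w + 1) + 1 = m - w by omega] at hs
    calc 3 ^ (w + 1) * (m - (w + 1)).choose (m / 3)
        = 3 ^ w * (3 * (m - (w + 1)).choose (m / 3)) := by ring
      _ ≤ 3 ^ w * (2 * (m - w).choose (m / 3)) := Nat.mul_le_mul_left _ hs
      _ = 2 * (3 ^ w * (m - w).choose (m / 3)) := by ring
      _ ≤ 2 * (2 ^ w * m.choose (m / 3)) := Nat.mul_le_mul_left _ ih'
      _ = 2 ^ (w + 1) * m.choose (m / 3) := by ring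
end

section
/- Let m be a positive integer divisible by 3 and let w be a natural number with w ≤ m/7. Then 9^w · binom(m − w, m/3 − w) ≥ 2^w · binom(m, m/3), where binom denotes the binomial coefficient. -/
/-- If `m > 0` is divisible by 3 and `w ≤ m/7`, then
`9^w · binom(m−w, m/3−w) ≥ 2^w · binom(m, m/3)`. -/
theorem stmt_4 (m w : ℕ) (hm : 0 < m) (h3 : 3 ∣ m) (hw : 7 * w ≤ m) :
    2 ^ w * m.choose (m / 3) ≤ 9 ^ w * (m - w).choose (m / 3 - w) := by
  obtain ⟨k, rfl⟩ := h3
  have hk : 3 * k / 3 = k := by omega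
  rw [hk]
  induction w with
  | zero => simp
  | succ w ih =>
    have ih' := ih (by omega)
    obtain ⟨j, hj⟩ : ∃ j, k = w + j + 1 := ⟨k - w - 1, by omega⟩
    obtain ⟨n, hn⟩ : ∃ n, 3 * k = w + n + 1 := ⟨3 * k - w - 1, by omega⟩
    have e1 : 3 * k - w = n + 1 := by omega
    have e2 : k - w = j + 1 := by omega
    have e3 : 3 * k - (w + 1) = n := by omega
    have e4 : k - (w + 1) = j := by omega
    rw [e1, e2] at ih'
    rw [e3, e4]
    have hs : 2 * (n + 1).choose (j + 1) ≤ 9 * n.choose j := by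
      have h1 : (n + 1) * n.choose j = (n + 1).choose (j + 1) * (j + 1) :=
        Nat.add_one_mul_choose_eq n j
      have h2 : 2 * (n + 1) ≤ 9 * (j + 1) := by omega
      refine Nat.le_of_mul_le_mul_left (c := n + 1) ?_ (by omega)
      have h4 := Nat.mul_le_mul_right ((n + 1).choose (j + 1)) h2
      linarith
    calc 2 ^ (w + 1) * (3 * k).choose k = 2 * (2 ^ w * (3 * k).choose k) := by ring
      _ ≤ 2 * (9 ^ w * (n + 1).choose (j + 1)) := Nat.mul_le_mul_left 2 ih'
      _ = 9 ^ w * (2 * (n + 1).choose (j + 1)) := by ring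
      _ ≤ 9 ^ w * (9 * n.choose j) := Nat.mul_le_mul_left _ hs
      _ = 9 ^ (w + 1) * n.choose j := by ring
end

section
/- Let Ω be a finite probability space with probability mass function μ, and let P₀, P₁, P₂ : Ω → ℝ be nonnegative functions with E[P₁] > 0. Let 0 < ε ≤ 1/10 and set δ := 2·√ε. If E[P₀] ≤ ε and E[P₁] ≥ 1 − ε and E[P₂] ≤ 1 (all expectations with respect to μ), then there exists an outcome o ∈ Ω with μ(o) > 0 such that P₀(o) ≤ δ·P₁(o), P₂(o) ≤ (1+δ)·P₁(o), and P₁(o) > 0. -/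
/-- Fact 4.2. Let `Ω` be a finite probability space with probability mass
function `μ`, and `P₀, P₁, P₂ : Ω → ℝ` nonnegative with `E[P₁] > 0`. If `0 < ε ≤ 1/10`,
`E[P₀] ≤ ε`, `E[P₁] ≥ 1 − ε`, `E[P₂] ≤ 1`, then some outcome `o` with `μ o > 0` satisfies
`P₀ o ≤ δ·P₁ o`, `P₂ o ≤ (1+δ)·P₁ o`, and `P₁ o > 0`, where `δ = 2√ε`. -/
theorem stmt_5 {Ω : Type*} [Fintype Ω] (μ : Ω → ℝ)
    (hμ0 : ∀ o, 0 ≤ μ o) (hμ1 : ∑ o, μ o = 1)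
    (P₀ P₁ P₂ : Ω → ℝ) (h₀ : ∀ o, 0 ≤ P₀ o) (h₁ : ∀ o, 0 ≤ P₁ o) (h₂ : ∀ o, 0 ≤ P₂ o)
    (ε : ℝ) (hε0 : 0 < ε) (hε1 : ε ≤ 1 / 10)
    (hE1pos : 0 < ∑ o, μ o * P₁ o)
    (hE0 : ∑ o, μ o * P₀ o ≤ ε)
    (hE1 : 1 - ε ≤ ∑ o, μ o * P₁ o)
    (hE2 : ∑ o, μ o * P₂ o ≤ 1) :
    ∃ o : Ω, 0 < μ o ∧ P₀ o ≤ 2 * Real.sqrt ε * P₁ o ∧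
      P₂ o ≤ (1 + 2 * Real.sqrt ε) * P₁ o ∧ 0 < P₁ o := by
  by_contra hcon
  push Not at hcon
  obtain ⟨s, hs⟩ : ∃ s, s = Real.sqrt ε := ⟨_, rfl⟩
  rw [← hs] at hcon
  have hs0 : 0 < s := by rw [hs]; exact Real.sqrt_pos.mpr hε0
  have hss : s * s = ε := by rw [hs]; exact Real.mul_self_sqrt hε0.le
  have hs1 : s < 1 / 2 := by nlinarith
  have key : ∀ o, (1 + 2 * s) * (2 * s) * (μ o * P₁ o) ≤
      (1 + 2 * s) * (μ o * P₀ o) + 2 * s * (μ o * P₂ o) := by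
    intro o
    have hp : (1 + 2 * s) * (2 * s) * P₁ o ≤ (1 + 2 * s) * P₀ o + 2 * s * P₂ o ∨ μ o = 0 := by
      rcases (hμ0 o).eq_or_lt with hm | hm
      · exact Or.inr hm.symm
      left
      have a0 : 0 ≤ (1 + 2 * s) * P₀ o := mul_nonneg (by linarith) (h₀ o)
      have a2 : 0 ≤ 2 * s * P₂ o := mul_nonneg (by linarith) (h₂ o)
      by_cases c0 : P₀ o ≤ 2 * s * P₁ o
      · by_cases c2 : P₂ o ≤ (1 + 2 * s) * P₁ o
        · have := le_antisymm (hcon o hm c0 c2) (h₁ o)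
          rw [this]
          linarith
        · have := mul_le_mul_of_nonneg_left (not_le.mp c2).le (by linarith : 0 ≤ 2 * s)
          linarith
      · have := mul_le_mul_of_nonneg_left (not_le.mp c0).le (by linarith : 0 ≤ 1 + 2 * s)
        linarith
    rcases hp with hp | hp
    · have := mul_le_mul_of_nonneg_left hp (hμ0 o)
      linarith
    · simp [hp]
  have hsum := Finset.sum_le_sum (fun o (_ : o ∈ Finset.univ) => key o)
  rw [Finset.sum_add_distrib, ← Finset.mul_sum, ← Finset.mul_sum, ← Finset.mul_sum] at hsum
  have b1 := mul_le_mul_of_nonneg_left hE1 (by positivity : 0 ≤ (1 + 2 * s) * (2 * s))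
  have b0 := mul_le_mul_of_nonneg_left hE0 (by positivity : 0 ≤ 1 + 2 * s)
  have b2 := mul_le_mul_of_nonneg_left hE2 (by positivity : 0 ≤ 2 * s)
  have hfin : (1 + 2 * s) * (2 * s) * (1 - ε) ≤ (1 + 2 * s) * ε + 2 * s * 1 := by linarith
  rw [← hss] at hfin
  have hpos : 0 < s * s * (3 - 4 * s - 4 * (s * s)) := by
    apply mul_pos (by positivity)
    nlinarith
  nlinarith
end

section
/- Let m be a positive even integer and let w be a natural number with w ≤ m/4. Then 3^w · binom(m − w, m/2) ≥ binom(m, m/2), where binom denotes the binomial coefficient. Equivalently, if G_1 is the uniform distribution on {x ∈ {0,1}^m : |x| = m/2} and C is a conjunction consisting only of w ≤ m/4 negative literals, then C(G_1) ≥ 3^{−w}. -/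
theorem stmt_6_aux (k w : ℕ) (hk : 0 < k) (hw : 2 * w ≤ k) :
    (2 * k).choose k ≤ 3 ^ w * (2 * k - w).choose k := by
  induction w with
  | zero => simp
  | succ w ih =>
    have ih := ih (by omega)
    obtain ⟨n, hn⟩ : ∃ n, 2 * k - w = n + 1 := ⟨2 * k - w - 1, by omega⟩
    have hn' : 2 * k - (w + 1) = n := by omega
    rw [hn] at ih
    rw [hn']
    have h := Nat.choose_mul_succ_eq n k
    have h1 : n + 1 ≤ 3 * (n + 1 - k) := by omega
    have h2 : (n + 1).choose k ≤ 3 * n.choose k := by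
      have hpos : 0 < n + 1 - k := by omega
      refine Nat.le_of_mul_le_mul_right ?_ hpos
      rw [← h]
      calc n.choose k * (n + 1) ≤ n.choose k * (3 * (n + 1 - k)) := Nat.mul_le_mul_left _ h1
        _ = _ := by ring
    calc _ ≤ 3 ^ w * (n + 1).choose k := ih
      _ ≤ 3 ^ w * (3 * n.choose k) := Nat.mul_le_mul_left _ h2
      _ = _ := by ring

/-- If `m > 0` is even and `w ≤ m/4`, then
`3^w · binom(m−w, m/2) ≥ binom(m, m/2)`. -/
theorem stmt_6 (m w : ℕ) (hm : 0 < m) (h2 : 2 ∣ m) (hw : 4 * w ≤ m) :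
    m.choose (m / 2) ≤ 3 ^ w * (m - w).choose (m / 2) := by
  obtain ⟨k, rfl⟩ := h2
  rw [Nat.mul_div_cancel_left k (by norm_num)]
  exact stmt_6_aux k w (by omega) (by omega)
end

section
/- There exists n₀ ∈ ℕ such that for all even integers n ≥ n₀ the following holds. Let b be an integer with 0 ≤ b ≤ n/2, let A be a finite set with |A| = n − b, and let c : A → ℝ satisfy 0 ≤ c(i) ≤ 1 for all i ∈ A and |{i ∈ A : c(i) < n^{−2/5}}| ≤ n/4. For a subset S ⊆ A write c_S := ∏_{i∈S} c(i). Define q₁ := (1/binom(n − b, n/2 − b)) · Σ_{S ⊆ A, |S| = n/2 − b} c_S and q₂ := (1/binom(n − b, n/2 + 1 − b)) · Σ_{S ⊆ A, |S| = n/2 + 1 − b} c_S, i.e., expectations of c_S over uniformly random subsets of the respective sizes. Then 0 < q₁ ≤ √n · q₂. -/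
open Finset

lemma esymm_double (A : Finset ℕ) (c : ℕ → ℝ) (k : ℕ) :
    ((k : ℝ) + 1) * ∑ T ∈ A.powersetCard (k + 1), ∏ i ∈ T, c i
      = ∑ S ∈ A.powersetCard k, (∏ i ∈ S, c i) * ∑ i ∈ A \ S, c i := by
  have h1 : ((k : ℝ) + 1) * ∑ T ∈ A.powersetCard (k + 1), ∏ i ∈ T, c i
      = ∑ T ∈ A.powersetCard (k + 1), ∑ _i ∈ T, ∏ j ∈ T, c j := by
    rw [Finset.mul_sum]
    refine Finset.sum_congr rfl fun T hT => ?_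
    rw [Finset.sum_const, (Finset.mem_powersetCard.1 hT).2, nsmul_eq_mul]
    push_cast; ring
  rw [h1]
  simp_rw [Finset.mul_sum]
  rw [Finset.sum_sigma', Finset.sum_sigma']
  refine Finset.sum_bij' (fun x _ => ⟨x.1.erase x.2, x.2⟩) (fun x _ => ⟨insert x.2 x.1, x.2⟩)
    ?_ ?_ ?_ ?_ ?_
  · rintro ⟨T, i⟩ h
    simp only [Finset.mem_sigma, Finset.mem_powersetCard, Finset.mem_sdiff] at h ⊢
    obtain ⟨⟨hT, hc⟩, hi⟩ := h
    refine ⟨⟨(Finset.erase_subset _ _).trans hT, ?_⟩, hT hi, by simp⟩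
    rw [Finset.card_erase_of_mem hi, hc]; rfl
  · rintro ⟨S, i⟩ h
    simp only [Finset.mem_sigma, Finset.mem_powersetCard, Finset.mem_sdiff] at h ⊢
    obtain ⟨⟨hS, hc⟩, hi, hiS⟩ := h
    refine ⟨⟨Finset.insert_subset hi hS, ?_⟩, by simp⟩
    rw [Finset.card_insert_of_notMem hiS, hc]
  · rintro ⟨T, i⟩ h
    simp only [Finset.mem_sigma] at h
    simp [Finset.insert_erase h.2]
  · rintro ⟨S, i⟩ h
    simp only [Finset.mem_sigma, Finset.mem_sdiff] at h
    simp [Finset.erase_insert h.2.2]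
  · rintro ⟨T, i⟩ h
    simp only [Finset.mem_sigma] at h
    exact (Finset.prod_erase_mul T c h.2).symm

lemma pow_bound (n : ℕ) (hn : 1024 ≤ n) :
    2 ≤ Real.sqrt n * (n : ℝ) ^ (-(2 / 5) : ℝ) := by
  have hn' : (1024 : ℝ) ≤ n := by exact_mod_cast hn
  have h0 : (0 : ℝ) < n := by linarith
  rw [Real.sqrt_eq_rpow, ← Real.rpow_add h0]
  calc (2 : ℝ) = (1024 : ℝ) ^ (1 / 2 + -(2 / 5) : ℝ) := by
        rw [show (1024 : ℝ) = 2 ^ (10 : ℝ) by norm_num, ← Real.rpow_mul (by norm_num)]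
        norm_num
    _ ≤ _ := Real.rpow_le_rpow (by norm_num) hn' (by norm_num)

/-- Claim 4.5(ii). There is `n₀` such that for all even `n ≥ n₀`:
if `0 ≤ b ≤ n/2`, `A` is a finite set with `|A| = n − b`, `c : A → [0,1]` with at most
`n/4` elements satisfying `c i < n^{−2/5}`, and `q₁, q₂` are the expectations of
`∏_{i∈S} c i` over uniformly random subsets `S ⊆ A` of sizes `n/2 − b` and `n/2 + 1 − b`
respectively, then `0 < q₁ ≤ √n · q₂`. -/
theorem stmt_8 :
    ∃ n₀ : ℕ, ∀ n : ℕ, n₀ ≤ n → 2 ∣ n →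
      ∀ b : ℕ, b ≤ n / 2 →
      ∀ (A : Finset ℕ) (c : ℕ → ℝ), A.card = n - b →
      (∀ i ∈ A, 0 ≤ c i ∧ c i ≤ 1) →
      ((#{i ∈ A | c i < (n : ℝ) ^ (-(2 / 5) : ℝ)} : ℝ) ≤ (n : ℝ) / 4) →
      0 < (∑ S ∈ A.powersetCard (n / 2 - b), ∏ i ∈ S, c i) / ((n - b).choose (n / 2 - b) : ℝ) ∧
        (∑ S ∈ A.powersetCard (n / 2 - b), ∏ i ∈ S, c i) / ((n - b).choose (n / 2 - b) : ℝ)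
          ≤ Real.sqrt n *
            ((∑ S ∈ A.powersetCard (n / 2 + 1 - b), ∏ i ∈ S, c i)
              / ((n - b).choose (n / 2 + 1 - b) : ℝ)) := by
  refine ⟨1024, fun n hn h2 b hb A c hA hc hsmall => ?_⟩
  obtain ⟨m, rfl⟩ := h2
  have e1 : 2 * m / 2 = m := by omega
  rw [e1] at hb ⊢
  obtain ⟨k, rfl⟩ := Nat.exists_eq_add_of_le hb
  have e2 : b + k - b = k := by omega
  have e3 : b + k + 1 - b = k + 1 := by omega
  have e4 : 2 * (b + k) - b = (b + k) + k := by omega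
  rw [e4] at hA
  rw [e2, e3, e4]
  generalize hm : b + k = m at *
  have hpb := pow_bound _ hn
  set t : ℝ := ((2 * m : ℕ) : ℝ) ^ (-(2 / 5) : ℝ) with ht
  have hm0 : (0 : ℝ) < m := by
    have : 0 < m := by omega
    exact_mod_cast this
  have htpos : 0 < t := Real.rpow_pos_of_pos (by push_cast; linarith) _
  have hsm : (#{i ∈ A | c i < t} : ℝ) ≤ m / 2 := by
    refine hsmall.trans (le_of_eq ?_)
    push_cast; ring
  have hcard : #{i ∈ A | c i < t} + #{i ∈ A | ¬ c i < t} = m + k := by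
    rw [Finset.card_filter_add_card_filter_not, hA]
  have hsmN : 2 * #{i ∈ A | c i < t} ≤ m := by
    have : (2 : ℝ) * #{i ∈ A | c i < t} ≤ m := by linarith
    exact_mod_cast this
  have hprod : ∀ S ∈ A.powersetCard k, 0 ≤ ∏ i ∈ S, c i := fun S hS =>
    Finset.prod_nonneg fun i hi => (hc i ((Finset.mem_powersetCard.1 hS).1 hi)).1
  have hpos : 0 < ∑ S ∈ A.powersetCard k, ∏ i ∈ S, c i := by
    obtain ⟨S, hS, hSc⟩ := Finset.exists_subset_card_eq
      (show k ≤ #{i ∈ A | ¬ c i < t} by omega)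
    refine Finset.sum_pos' hprod ⟨S, Finset.mem_powersetCard.2
      ⟨hS.trans (Finset.filter_subset _ _), hSc⟩, Finset.prod_pos fun i hi => ?_⟩
    have := (Finset.mem_filter.1 (hS hi)).2
    linarith
  have hin : ∀ S ∈ A.powersetCard k, (m : ℝ) / 2 * t ≤ ∑ i ∈ A \ S, c i := by
    intro S hS
    obtain ⟨hSA, hSc⟩ := Finset.mem_powersetCard.1 hS
    have hd : #(A \ S) = m := by
      rw [Finset.card_sdiff_of_subset hSA, hA, hSc]; omega
    have hs1 : #{i ∈ A \ S | c i < t} ≤ #{i ∈ A | c i < t} :=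
      Finset.card_le_card (Finset.filter_subset_filter _ Finset.sdiff_subset)
    have hs2 : #{i ∈ A \ S | c i < t} + #{i ∈ A \ S | ¬ c i < t} = m := by
      rw [Finset.card_filter_add_card_filter_not, hd]
    have hs3 : (m : ℝ) / 2 ≤ #{i ∈ A \ S | ¬ c i < t} := by
      have : m ≤ 2 * #{i ∈ A \ S | ¬ c i < t} := by omega
      have : (m : ℝ) ≤ 2 * #{i ∈ A \ S | ¬ c i < t} := by exact_mod_cast this
      linarith
    calc (m : ℝ) / 2 * t ≤ #{i ∈ A \ S | ¬ c i < t} * t := by gcongr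
      _ = ∑ i ∈ A \ S with ¬ c i < t, t := by simp
      _ ≤ ∑ i ∈ A \ S with ¬ c i < t, c i :=
          Finset.sum_le_sum fun i hi => not_lt.1 (Finset.mem_filter.1 hi).2
      _ ≤ ∑ i ∈ A \ S, c i :=
          Finset.sum_le_sum_of_subset_of_nonneg (Finset.filter_subset _ _)
            fun i hi _ => (hc i (Finset.mem_sdiff.1 hi).1).1
  have hmain : (m : ℝ) / 2 * t * ∑ S ∈ A.powersetCard k, ∏ i ∈ S, c i
      ≤ ((k : ℝ) + 1) * ∑ T ∈ A.powersetCard (k + 1), ∏ i ∈ T, c i := by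
    rw [esymm_double, Finset.mul_sum]
    refine Finset.sum_le_sum fun S hS => ?_
    rw [mul_comm]
    exact mul_le_mul_of_nonneg_left (hin S hS) (hprod S hS)
  have hC1 : (0 : ℝ) < ((m + k).choose k : ℝ) := by
    exact_mod_cast Nat.choose_pos (by omega)
  have hC2 : (0 : ℝ) < ((m + k).choose (k + 1) : ℝ) := by
    have : 0 < m := by exact_mod_cast hm0
    exact_mod_cast Nat.choose_pos (by omega)
  have hCC : ((m + k).choose (k + 1) : ℝ) * (k + 1) = (m + k).choose k * m := by
    have := Nat.choose_succ_right_eq (m + k) k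
    rw [Nat.add_sub_cancel] at this
    exact_mod_cast this
  refine ⟨div_pos hpos hC1, ?_⟩
  set E1 := ∑ S ∈ A.powersetCard k, ∏ i ∈ S, c i
  set E2 := ∑ S ∈ A.powersetCard (k + 1), ∏ i ∈ S, c i
  set r := Real.sqrt ((2 * m : ℕ) : ℝ)
  have hr : 0 ≤ r := Real.sqrt_nonneg _
  rw [← mul_div_assoc, div_le_div_iff₀ hC1 hC2]
  have hk : (0 : ℝ) < (k : ℝ) + 1 := by positivity
  have h3 : (m : ℝ) * E1 ≤ r * ((k + 1) * E2) := by
    calc (m : ℝ) * E1 = (m / 2 * E1) * 2 := by ring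
      _ ≤ (m / 2 * E1) * (r * t) := mul_le_mul_of_nonneg_left hpb (by positivity)
      _ = r * (m / 2 * t * E1) := by ring
      _ ≤ _ := mul_le_mul_of_nonneg_left hmain hr
  refine le_of_mul_le_mul_right ?_ hk
  calc E1 * ((m + k).choose (k + 1) : ℝ) * (k + 1)
      = ((m + k).choose k : ℝ) * (m * E1) := by rw [mul_assoc, hCC]; ring
    _ ≤ ((m + k).choose k : ℝ) * (r * ((k + 1) * E2)) := mul_le_mul_of_nonneg_left h3 hC1.le
    _ = _ := by ring
end
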